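/- Let Δ̃ := Δ_P \ {α_k} for some 1 ≤ k ≤ r. Then: (a) the minimal-length representative ω_Pω_{Δ̃} of the longest coset equals u_k^{(r)}u_k^{(r−1)}⋯u_k^{(k)} and gr(ω_Pω_{Δ̃}) = Σ_{p=k}^r k·e_p; (b) for every v ∈ W_{Δ_P}^{Δ̃}, writing gr(v) = Σ_{p=1}^{r+1} j_p e_p, one has j_p = 0 for p < k and for p = r+1, and k ≥ j_k ≥ j_{k+1} ≥ ⋯ ≥ j_r ≥ 0. -/

import Mathlib

/-!
The Weyl group theory needed here rests on the exchange condition (`exchange`), which follows from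
the fact that `s_i` permutes the positive roots other than `α_i`. It yields the additivity
`ℓ(x u) = ℓ(x) + ℓ(u)` for `x` minimal modulo `W_S` and `u ∈ W_S` (`len_minRep_mul`) and
`ℓ(ω_S u) = ℓ(ω_S) - ℓ(u)` for `u ∈ W_S` (`len_longest_mul`).

In type `A`, the minimal representatives of `W_{Δ_m}` modulo `W_{Δ_{m-1}}` are exactly the elements
`s_j ⋯ s_m`, of length `m - j + 1` (`minRep_eq_run`). Let `v = v_r ⋯ v_1` be minimal modulo
`W_{Δ̃}`; its length is the sum of the lengths of the factors.

* The product `v_{k-1} ⋯ v_1` lies in `W_{Δ̃}`, so it is trivial by minimality (`chain_low`).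
* If `ℓ(v_{m+1}) > ℓ(v_m)` for some `m ≥ k`, then `v_{m+1} v_m = (s_a ⋯ s_{m+1})(s_b ⋯ s_m)` with
  `a ≤ b`, which equals `(s_{b+1} ⋯ s_{m+1})(s_a ⋯ s_{m+1})`. The last letter `s_{m+1}` commutes
  with the factors to its right, so `v s_{m+1}` is shorter than `v`, although `s_{m+1} ∈ W_{Δ̃}`
  (`chain_step`).

This is part (b), and it bounds `ℓ(v)` by `k (r - k + 1)`. For part (a), `ω_P ω_{Δ̃}` is minimal
modulo `W_{Δ̃}` and has length `ℓ(ω_P) - ℓ(ω_{Δ̃})`. Here `2 ℓ(ω_P) ≥ r (r + 1)`, while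
`2 ℓ(ω_{Δ̃}) ≤ k (k - 1) + (r - k) (r - k + 1)` because `Δ̃` has type `A_{k-1} × A_{r-k}`; the
difference is `2 k (r - k + 1)`. Hence every bound in (b) is attained (`chain_eq`), which determines
all the factors.
-/

open scoped BigOperators

/-- A reduced crystallographic root system with a fixed base `α_1, …, α_n` of simple
roots, bundled with its Weyl group `W`.  A root `γ` is recorded by its integer
coordinate vector in the basis of simple roots (so the `i`-th simple root is
`Pi.single i 1`), and `cor γ` is the coordinate vector of the coroot `γ^∨` in the
basis of simple coroots (hence `cor γ i = ⟨χ_i, γ^∨⟩` for the fundamental weights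
`χ_i`).  `A i j = ⟨α_i, α_j^∨⟩` is the Cartan matrix, `σ γ` is the reflection `s_γ`
and `act` is the action of the Weyl group on the root lattice. -/
structure RootSystemData (n : ℕ) where
  A : Fin n → Fin n → ℤ
  R : Finset (Fin n → ℤ)
  cor : (Fin n → ℤ) → (Fin n → ℤ)
  W : Type
  [grp : Group W]
  σ : (Fin n → ℤ) → W
  act : W → (Fin n → ℤ) → (Fin n → ℤ)
  simple_mem : ∀ i : Fin n, (Pi.single i 1 : Fin n → ℤ) ∈ R
  root_ne_zero : ∀ γ ∈ R, γ ≠ 0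
  neg_mem : ∀ γ ∈ R, -γ ∈ R
  pos_or_neg : ∀ γ ∈ R, (∀ i, 0 ≤ γ i) ∨ (∀ i, γ i ≤ 0)
  reduced : ∀ γ ∈ R, ∀ k : ℤ, k • γ ∈ R → k = 1 ∨ k = -1
  cor_simple : ∀ i : Fin n, cor (Pi.single i 1) = Pi.single i 1
  cor_neg : ∀ γ ∈ R, cor (-γ) = -(cor γ)
  pair_self : ∀ γ ∈ R, (∑ i, ∑ j, γ i * A i j * cor γ j) = 2
  act_one : ∀ x, act 1 x = x
  act_mul : ∀ w w' x, act (w * w') x = act w (act w' x)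
  act_refl : ∀ γ ∈ R, ∀ x, act (σ γ) x = x - (∑ i, ∑ j, x i * A i j * cor γ j) • γ
  act_mem : ∀ (w : W), ∀ γ ∈ R, act w γ ∈ R
  cor_refl : ∀ γ ∈ R, ∀ β ∈ R,
    cor (act (σ γ) β) = cor β - (∑ i, ∑ j, γ i * A i j * cor β j) • cor γ
  refl_sq : ∀ γ ∈ R, σ γ * σ γ = 1
  refl_act : ∀ (w : W), ∀ γ ∈ R, σ (act w γ) = w * σ γ * w⁻¹
  act_faithful : ∀ w w' : W, (∀ γ ∈ R, act w γ = act w' γ) → w = w'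
  generated : ∀ w : W, ∃ l : List (Fin n), w = (l.map fun i => σ (Pi.single i 1)).prod

namespace RootSystemData

instance {n : ℕ} (c : RootSystemData n) : Group c.W := c.grp

/-- the pairing `⟨x, λ⟩` between an element `x` of the root lattice (coordinates in
the basis of simple roots) and an element `λ` of the coroot lattice (coordinates in
the basis of simple coroots) -/
def pair {n : ℕ} (c : RootSystemData n) (x lam : Fin n → ℤ) : ℤ :=
  ∑ i, ∑ j, x i * c.A i j * lam j

/-- the `i`-th simple root -/
def sroot {n : ℕ} (_c : RootSystemData n) (i : Fin n) : Fin n → ℤ := Pi.single i 1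

/-- the simple reflection `s_i` -/
def s {n : ℕ} (c : RootSystemData n) (i : Fin n) : c.W := c.σ (c.sroot i)

/-- `s_{α_{t+1}}` for a `0`-based natural number index `t` (`= 1` when out of range) -/
def sN {n : ℕ} (c : RootSystemData n) (t : ℕ) : c.W := if h : t < n then c.s ⟨t, h⟩ else 1

/-- `⟨2ρ, λ⟩ = Σ_{β ∈ R^+} ⟨β, λ⟩`, where `ρ` is the half-sum of the positive roots -/
def pairTwoRho {n : ℕ} (c : RootSystemData n) (lam : Fin n → ℤ) : ℤ :=
  ∑ β ∈ c.R, if ∀ i, 0 ≤ β i then c.pair β lam else 0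

/-- the length of `w ∈ W` with respect to the simple reflections -/
noncomputable def len {n : ℕ} (c : RootSystemData n) (w : c.W) : ℕ :=
  sInf {k | ∃ l : List (Fin n), l.length = k ∧ (l.map c.s).prod = w}

/-- the parabolic subgroup `W_S` generated by the simple reflections indexed by `S` -/
def Wsub {n : ℕ} (c : RootSystemData n) (S : Finset (Fin n)) : Subgroup c.W :=
  Subgroup.closure (c.s '' ↑S)

/-- `w ∈ W_T^S`: `w ∈ W_T` and `w` has minimal length in the coset `w W_S` -/
def MinRep {n : ℕ} (c : RootSystemData n) (T S : Finset (Fin n)) (w : c.W) : Prop :=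
  w ∈ c.Wsub T ∧ ∀ u ∈ c.Wsub S, c.len w ≤ c.len (w * u)

/-- `w` is the longest element of `W_S` -/
def IsLongest {n : ℕ} (c : RootSystemData n) (S : Finset (Fin n)) (w : c.W) : Prop :=
  w ∈ c.Wsub S ∧ ∀ v ∈ c.Wsub S, c.len v ≤ c.len w

end RootSystemData

/-- the support of `γ` is contained in `S`, i.e. `γ` lies in the span of
`{α_i : i ∈ S}` (for a root `γ`, membership in `R_S`) -/
def suppIn {n : ℕ} (S : Finset (Fin n)) (γ : Fin n → ℤ) : Prop :=
  ∀ i, i ∉ S → γ i = 0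

/-- `Δ_j` for `0 ≤ j ≤ r+1`: the index set of the first `j` simple roots for `j ≤ r`,
and all of `Δ` for `j = r+1`.  (Indices of simple roots are `0`-based, so
`α_1, …, α_j` correspond to the indices `0, …, j-1`.) -/
def deltaSet (n r j : ℕ) : Finset (Fin n) :=
  if j = r + 1 then Finset.univ else Finset.univ.filter fun i => (i : ℕ) < j

namespace RootSystemData

/-- `v 0, …, v r` (standing for `v_1, …, v_{r+1}`) is the decomposition of `w`
associated to `(Δ_P, Υ)`:  each `v_i ∈ W_{Δ_i}^{Δ_{i-1}}` and `w = v_{r+1} v_r ⋯ v_1`. -/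
def IsDecomp {n : ℕ} (c : RootSystemData n) (r : ℕ) (w : c.W)
    (v : Fin (r + 1) → c.W) : Prop :=
  (∀ k : Fin (r + 1), c.MinRep (deltaSet n r ((k : ℕ) + 1)) (deltaSet n r (k : ℕ)) (v k)) ∧
    w = (List.ofFn v).reverse.prod

/-- the first `m` simple roots `α_1, …, α_m` form a path of type `A_m`:
`⟨α_i, α_j^∨⟩ = -1` if `|i-j| = 1` and `⟨α_i, α_j^∨⟩ = 0` if `|i-j| ≥ 2`. -/
def PathA {n : ℕ} (c : RootSystemData n) (m : ℕ) : Prop :=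
  ∀ i j : Fin n, (i : ℕ) < m → (j : ℕ) < m →
    (((i : ℕ) + 1 = (j : ℕ) ∨ (j : ℕ) + 1 = (i : ℕ)) → c.A i j = -1) ∧
    ((i : ℕ) + 2 ≤ (j : ℕ) ∨ (j : ℕ) + 2 ≤ (i : ℕ) → c.A i j = 0)

/-- `u_{[k,m]} = s_k s_{k+1} ⋯ s_m` (`1`-based indices; `u_{[k,m]} = 1` for `k > m`) -/
def uu {n : ℕ} (c : RootSystemData n) (k m : ℕ) : c.W :=
  ((List.range' k (m + 1 - k)).map fun t => c.sN (t - 1)).prod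

/-- `u_i^{(m)} = s_{m-i+1} s_{m-i+2} ⋯ s_m` -/
def uElt {n : ℕ} (c : RootSystemData n) (i m : ℕ) : c.W := c.uu (m - i + 1) m

end RootSystemData

/-- strict lexicographic order on `Fin m → ℤ` -/
def lexLT {m : ℕ} (x y : Fin m → ℤ) : Prop :=
  ∃ j, x j < y j ∧ ∀ k, k < j → x k = y k

/-- lexicographic order on `Fin m → ℤ` -/
def lexLE {m : ℕ} (x y : Fin m → ℤ) : Prop := x = y ∨ lexLT x y

/-- the grading `gr(q_{α_{j+1}^∨}) ∈ ℤ^{r+1}` (for the `0`-based index `j < r`), when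
`Δ_P` is of type `A_r`: in `1`-based terms, `gr(q_{α_1^∨}) = 2·e_1` and
`gr(q_{α_j^∨}) = (1-j)·e_{j-1} + (1+j)·e_j` for `2 ≤ j ≤ r`. -/
def grQ (r j : ℕ) : Fin (r + 1) → ℤ := fun k =>
  (if (k : ℕ) = j then (j : ℤ) + 2 else 0) + (if (k : ℕ) + 1 = j then -(j : ℤ) else 0)

/-- the grading `gr(q_λ)` for `λ ∈ Q_P^∨` (coordinates in simple coroots), extended
additively from the `gr(q_{α_j^∨})`, when `Δ_P` is of type `A_r` -/
def grQlam (n r : ℕ) (lam : Fin n → ℤ) : Fin (r + 1) → ℤ :=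
  fun k => ∑ j, lam j * grQ r (j : ℕ) k

namespace RootSystemData

variable {n : ℕ} (c : RootSystemData n)

/-! ### Roots, words and the exchange condition -/

theorem act_s (i : Fin n) (x : Fin n → ℤ) :
    c.act (c.s i) x = x - (∑ a, x a * c.A a i) • c.sroot i := by
  have h := c.act_refl _ (c.simple_mem i) x
  rw [c.cor_simple] at h
  simpa [s, sroot, Pi.single_apply] using h

theorem A_diag (i : Fin n) : c.A i i = 2 := by
  have h := c.pair_self _ (c.simple_mem i)
  rw [c.cor_simple] at h
  simpa [Pi.single_apply] using h

theorem act_s_sroot (i j : Fin n) :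
    c.act (c.s i) (c.sroot j) = c.sroot j - c.A j i • c.sroot i := by
  rw [act_s]; simp [sroot, Pi.single_apply]

theorem act_s_self (i : Fin n) : c.act (c.s i) (c.sroot i) = -c.sroot i := by
  rw [act_s_sroot, A_diag, two_smul]; abel

theorem act_s_apply_ne {i j : Fin n} (h : j ≠ i) (x : Fin n → ℤ) :
    c.act (c.s i) x j = x j := by
  rw [act_s]; simp [sroot, h]

theorem sroot_mem (i : Fin n) : c.sroot i ∈ c.R := c.simple_mem i

theorem sroot_nonneg (i : Fin n) : 0 ≤ c.sroot i := by
  intro j; by_cases h : j = i <;> simp [sroot, h]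

theorem s_mul_s (i : Fin n) : c.s i * c.s i = 1 := c.refl_sq _ (c.simple_mem i)

theorem s_inv (i : Fin n) : (c.s i)⁻¹ = c.s i := inv_eq_of_mul_eq_one_left (c.s_mul_s i)

theorem nonneg_or_nonpos {γ : Fin n → ℤ} (h : γ ∈ c.R) : 0 ≤ γ ∨ γ ≤ 0 := c.pos_or_neg γ h

theorem not_both {γ : Fin n → ℤ} (h : γ ∈ c.R) (h1 : 0 ≤ γ) (h2 : γ ≤ 0) : False :=
  c.root_ne_zero γ h (le_antisymm h2 h1)

theorem exists_word (w : c.W) : ∃ l : List (Fin n), (l.map c.s).prod = w := by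
  obtain ⟨l, h⟩ := c.generated w
  exact ⟨l, h.symm⟩

theorem exists_addHom (w : c.W) :
    ∃ L : (Fin n → ℤ) →+ (Fin n → ℤ), ∀ x, c.act w x = L x := by
  obtain ⟨l, rfl⟩ := c.exists_word w
  induction l with
  | nil => exact ⟨AddMonoidHom.id _, fun x => by simpa using c.act_one x⟩
  | cons i l ih =>
    obtain ⟨L, hL⟩ := ih
    refine ⟨(AddMonoidHom.mk' (c.act (c.s i)) ?_).comp L, fun x => ?_⟩
    · intro a b
      simp only [act_s, Pi.add_apply, add_mul, Finset.sum_add_distrib, add_smul]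
      abel
    · rw [List.map_cons, List.prod_cons, c.act_mul, hL]; rfl

theorem act_neg (w : c.W) (x : Fin n → ℤ) : c.act w (-x) = -c.act w x := by
  obtain ⟨L, hL⟩ := c.exists_addHom w
  simp [hL]

theorem act_eq_sum (w : c.W) (x : Fin n → ℤ) :
    c.act w x = ∑ i, x i • c.act w (c.sroot i) := by
  obtain ⟨L, hL⟩ := c.exists_addHom w
  have hx : x = ∑ i, x i • c.sroot i := by
    ext j; simp [sroot, Pi.single_apply]
  conv_lhs => rw [hx]
  simp only [hL, map_sum, map_zsmul]

/-- A simple reflection `s_i` permutes the positive roots other than `α_i`. -/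
theorem eq_sroot {β : Fin n → ℤ} {i : Fin n} (hβ : β ∈ c.R) (h0 : 0 ≤ β)
    (h1 : c.act (c.s i) β ≤ 0) : β = c.sroot i := by
  have hj : ∀ j, j ≠ i → β j = 0 := fun j hj => by
    have a := h1 j
    rw [c.act_s_apply_ne hj] at a
    exact le_antisymm a (h0 j)
  have hb : β = β i • c.sroot i := by
    ext j
    by_cases h : j = i
    · subst h; simp [sroot]
    · simp [sroot, h, hj j h]
  have := h0 i
  rcases c.reduced _ (c.simple_mem i) (β i) (by rw [hb] at hβ; exact hβ) with h | h
  · rw [hb, h, one_smul]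
  · simp [h] at this

theorem conj_s {w : c.W} {i j : Fin n} (h : c.act w (c.sroot i) = c.sroot j) :
    w * c.s i = c.s j * w := by
  have := c.refl_act w _ (c.simple_mem i)
  change c.σ (c.act w (c.sroot i)) = w * c.s i * w⁻¹ at this
  rw [h] at this
  change c.s j = _ at this
  rw [this]; simp

/-- The exchange condition: if `w α_i` is negative, then `w s_i` is obtained from any word of
`w` by omitting a letter. -/
theorem exchange (i : Fin n) (l : List (Fin n))
    (h : c.act (l.map c.s).prod (c.sroot i) ≤ 0) :
    ∃ l' : List (Fin n), l'.length + 1 = l.length ∧ l'.Sublist l ∧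
      (l'.map c.s).prod = (l.map c.s).prod * c.s i := by
  induction l with
  | nil =>
    simp only [List.map_nil, List.prod_nil, c.act_one] at h
    exact (c.not_both (c.sroot_mem i) (c.sroot_nonneg i) h).elim
  | cons j l ih =>
    have hm := c.act_mem (l.map c.s).prod _ (c.sroot_mem i)
    rcases c.nonneg_or_nonpos hm with h0 | h0
    · rw [List.map_cons, List.prod_cons, c.act_mul] at h
      have := c.conj_s (c.eq_sroot hm h0 h)
      refine ⟨l, rfl, List.sublist_cons_self _ _, ?_⟩
      rw [List.map_cons, List.prod_cons, mul_assoc, this, ← mul_assoc, s_mul_s, one_mul]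
    · obtain ⟨l', h1, h2, h3⟩ := ih h0
      refine ⟨j :: l', by simp [h1], h2.cons_cons j, ?_⟩
      rw [List.map_cons, List.prod_cons, h3, List.map_cons, List.prod_cons, mul_assoc]

/-! ### The length function -/

theorem len_le (l : List (Fin n)) : c.len (l.map c.s).prod ≤ l.length :=
  Nat.sInf_le ⟨l, rfl, rfl⟩

theorem exists_reduced (w : c.W) :
    ∃ l : List (Fin n), l.length = c.len w ∧ (l.map c.s).prod = w := by
  obtain ⟨l, h⟩ := c.exists_word w
  exact Nat.sInf_mem (s := {k | ∃ l : List (Fin n), l.length = k ∧ (l.map c.s).prod = w})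
    ⟨l.length, l, rfl, h⟩

theorem len_one : c.len 1 = 0 := by simpa using c.len_le []

theorem eq_one_of_len {w : c.W} (h : c.len w = 0) : w = 1 := by
  obtain ⟨l, h1, h2⟩ := c.exists_reduced w
  rw [h, List.length_eq_zero_iff] at h1
  subst h1; simpa using h2.symm

theorem len_mul (w w' : c.W) : c.len (w * w') ≤ c.len w + c.len w' := by
  obtain ⟨l, h1, h2⟩ := c.exists_reduced w
  obtain ⟨l', h1', h2'⟩ := c.exists_reduced w'
  have := c.len_le (l ++ l')
  simpa [h2, h2', h1, h1'] using this

theorem len_inv_le (w : c.W) : c.len w⁻¹ ≤ c.len w := by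
  obtain ⟨l, h1, h2⟩ := c.exists_reduced w
  have h := c.len_le l.reverse
  have e : (l.reverse.map c.s).prod = w⁻¹ := by
    rw [← h2, List.prod_inv_reverse, List.map_reverse, List.map_map]
    congr 2
    exact List.map_congr_left fun i _ => (c.s_inv i).symm
  rwa [e, List.length_reverse, h1] at h

theorem len_inv (w : c.W) : c.len w⁻¹ = c.len w :=
  le_antisymm (c.len_inv_le w) (by simpa using c.len_inv_le w⁻¹)

theorem len_s_le (i : Fin n) : c.len (c.s i) ≤ 1 := by simpa using c.len_le [i]

theorem len_mul_s_of_neg {w : c.W} {i : Fin n} (h : c.act w (c.sroot i) ≤ 0) :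
    c.len (w * c.s i) + 1 ≤ c.len w := by
  obtain ⟨l, h1, h2⟩ := c.exists_reduced w
  subst h2
  obtain ⟨l', h3, -, h4⟩ := c.exchange i l h
  rw [← h4, ← h1, ← h3]
  exact Nat.succ_le_succ (c.len_le l')

theorem len_mul_s_of_pos {w : c.W} {i : Fin n} (h : 0 ≤ c.act w (c.sroot i)) :
    c.len (w * c.s i) = c.len w + 1 := by
  have h1 : c.act (w * c.s i) (c.sroot i) ≤ 0 := by
    rw [c.act_mul, act_s_self, act_neg]
    exact neg_nonpos.mpr h
  have h2 := c.len_mul_s_of_neg h1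
  rw [mul_assoc, s_mul_s, mul_one] at h2
  have := c.len_mul w (c.s i)
  have := c.len_s_le i
  omega

/-! ### Parabolic subgroups -/

theorem s_mem {S : Finset (Fin n)} {i : Fin n} (h : i ∈ S) : c.s i ∈ c.Wsub S :=
  Subgroup.subset_closure ⟨i, h, rfl⟩

theorem Wsub_mono {S T : Finset (Fin n)} (h : S ⊆ T) : c.Wsub S ≤ c.Wsub T :=
  Subgroup.closure_mono (Set.image_mono (by exact_mod_cast h))

theorem word_mem {S : Finset (Fin n)} {l : List (Fin n)} (h : ∀ i ∈ l, i ∈ S) :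
    (l.map c.s).prod ∈ c.Wsub S := by
  apply Subgroup.list_prod_mem
  intro x hx
  obtain ⟨i, hi, rfl⟩ := List.mem_map.mp hx
  exact c.s_mem (h i hi)

theorem exists_word_of_mem {S : Finset (Fin n)} {w : c.W} (h : w ∈ c.Wsub S) :
    ∃ l : List (Fin n), (∀ i ∈ l, i ∈ S) ∧ (l.map c.s).prod = w := by
  unfold Wsub at h
  induction h using Subgroup.closure_induction with
  | mem x hx =>
    obtain ⟨i, hi, rfl⟩ := hx
    exact ⟨[i], by simpa using hi, by simp⟩
  | one => exact ⟨[], by simp, by simp⟩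
  | mul x y _ _ hx hy =>
    obtain ⟨l, h1, rfl⟩ := hx
    obtain ⟨l', h1', rfl⟩ := hy
    refine ⟨l ++ l', fun i hi => ?_, by simp⟩
    rcases List.mem_append.mp hi with h | h
    · exact h1 i h
    · exact h1' i h
  | inv x _ hx =>
    obtain ⟨l, h1, rfl⟩ := hx
    refine ⟨l.reverse, by simpa using h1, ?_⟩
    rw [List.prod_inv_reverse, List.map_reverse, List.map_map]
    congr 2
    exact List.map_congr_left fun i _ => (c.s_inv i).symm

/-- Induction over a parabolic subgroup by left multiplication with simple reflections. -/
theorem Wsub_induction {S : Finset (Fin n)} {p : c.W → Prop} (h1 : p 1)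
    (hs : ∀ i ∈ S, ∀ w, w ∈ c.Wsub S → p w → p (c.s i * w)) {w : c.W} (hw : w ∈ c.Wsub S) :
    p w := by
  obtain ⟨l, hl, rfl⟩ := c.exists_word_of_mem hw
  clear hw
  induction l with
  | nil => simpa using h1
  | cons i l ih =>
    rw [List.map_cons, List.prod_cons]
    have hl' : ∀ j ∈ l, j ∈ S := fun j hj => hl j (List.mem_cons_of_mem _ hj)
    exact hs i (hl i List.mem_cons_self) _ (c.word_mem hl') (ih hl')

theorem act_apply_of_notMem {S : Finset (Fin n)} {w : c.W} (hw : w ∈ c.Wsub S)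
    {i : Fin n} (hi : i ∉ S) (x : Fin n → ℤ) : c.act w x i = x i := by
  refine c.Wsub_induction (p := fun w => c.act w x i = x i) ?_ ?_ hw
  · rw [c.act_one]
  · intro j hj w _ h
    rw [c.act_mul, c.act_s_apply_ne (by rintro rfl; exact hi hj), h]

theorem act_eq_self {S : Finset (Fin n)} {w : c.W} (hw : w ∈ c.Wsub S) {x : Fin n → ℤ}
    (h : ∀ j ∈ S, c.act (c.s j) x = x) : c.act w x = x := by
  refine c.Wsub_induction (p := fun w => c.act w x = x) (c.act_one x) ?_ hw
  intro j hj w _ hw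
  rw [c.act_mul, hw, h j hj]

theorem act_sroot_nonneg_of_notMem {S : Finset (Fin n)} {w : c.W} (hw : w ∈ c.Wsub S)
    {i : Fin n} (hi : i ∉ S) : 0 ≤ c.act w (c.sroot i) := by
  rcases c.nonneg_or_nonpos (c.act_mem w _ (c.sroot_mem i)) with h | h
  · exact h
  · have := h i
    rw [c.act_apply_of_notMem hw hi] at this
    simp [sroot] at this

/-- Induction over a parabolic subgroup along reduced words: if `w ∈ W_S` and `i ∈ S` satisfy
`w α_i > 0`, then one may pass from `w` to `w s_i`, the length growing by one. -/
theorem Wsub_reduced_induction {S : Finset (Fin n)} {p : c.W → Prop} (h1 : p 1)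
    (hs : ∀ w, w ∈ c.Wsub S → ∀ i ∈ S, 0 ≤ c.act w (c.sroot i) → p w → p (w * c.s i))
    {w : c.W} (hw : w ∈ c.Wsub S) : p w := by
  obtain ⟨l, hl, rfl⟩ := c.exists_word_of_mem hw
  clear hw
  -- Strong induction on the length of the word; a non-reduced word is replaced by a shorter one.
  induction hN : l.length using Nat.strong_induction_on generalizing l with
  | _ N ih =>
    rcases List.eq_nil_or_concat l with rfl | ⟨l0, i, rfl⟩
    · simpa using h1
    · have hl0 : ∀ j ∈ l0, j ∈ S := fun j hj => hl j (by simp [hj])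
      have hi : i ∈ S := hl i (by simp)
      have hlen : l0.length + 1 = N := by simpa using hN
      have e : ((l0.concat i).map c.s).prod = (l0.map c.s).prod * c.s i := by simp
      rcases c.nonneg_or_nonpos (c.act_mem (l0.map c.s).prod _ (c.sroot_mem i)) with h | h
      · rw [e]
        exact hs _ (c.word_mem hl0) i hi h (ih l0.length (by omega) l0 hl0 rfl)
      · obtain ⟨l', h2, h3, h4⟩ := c.exchange i l0 h
        rw [e, ← h4]
        exact ih l'.length (by omega) l' (fun j hj => hl0 j (h3.subset hj)) rfl

/-- The image of a positive root of `R_S` under an element that keeps the simple roots of `S`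
positive (up to the sign `ε`) is positive (up to the same sign). -/
theorem act_supp_nonneg {S : Finset (Fin n)} {x : c.W} {ε : ℤ}
    (hx : ∀ i ∈ S, 0 ≤ ε • c.act x (c.sroot i)) {u : c.W} (hu : u ∈ c.Wsub S) {i : Fin n}
    (hi : i ∈ S) (hpos : 0 ≤ c.act u (c.sroot i)) :
    0 ≤ ε • c.act (x * u) (c.sroot i) := by
  rw [c.act_mul, c.act_eq_sum x, Finset.smul_sum]
  refine Finset.sum_nonneg fun j _ => ?_
  by_cases hj : j ∈ S
  · rw [smul_comm]
    exact smul_nonneg (hpos j) (hx j hj)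
  · rw [c.act_apply_of_notMem hu hj]
    have : j ≠ i := by rintro rfl; exact hj hi
    simp [sroot, this]

theorem len_mul_of_pos {S : Finset (Fin n)} {x : c.W}
    (hx : ∀ i ∈ S, 0 ≤ c.act x (c.sroot i)) {u : c.W} (hu : u ∈ c.Wsub S) :
    c.len (x * u) = c.len x + c.len u := by
  refine c.Wsub_reduced_induction (p := fun u => c.len (x * u) = c.len x + c.len u) ?_ ?_ hu
  · simp [len_one]
  · intro w hw i hi h ih
    have h2 := c.act_supp_nonneg (ε := 1) (by simpa using hx) hw hi h
    rw [one_smul] at h2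
    rw [← mul_assoc, c.len_mul_s_of_pos h2, c.len_mul_s_of_pos h, ih, add_assoc]

theorem minRep_pos {S T : Finset (Fin n)} {x : c.W} (hx : c.MinRep T S x) :
    ∀ i ∈ S, 0 ≤ c.act x (c.sroot i) := by
  intro i hi
  rcases c.nonneg_or_nonpos (c.act_mem x _ (c.sroot_mem i)) with h | h
  · exact h
  · have h1 := c.len_mul_s_of_neg h
    have h2 := hx.2 _ (c.s_mem hi)
    omega

theorem len_minRep_mul {S T : Finset (Fin n)} {x : c.W} (hx : c.MinRep T S x) {u : c.W}
    (hu : u ∈ c.Wsub S) : c.len (x * u) = c.len x + c.len u :=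
  c.len_mul_of_pos (c.minRep_pos hx) hu

theorem exists_minRep {S T : Finset (Fin n)} (hST : S ⊆ T) {w : c.W} (hw : w ∈ c.Wsub T) :
    ∃ x u, c.MinRep T S x ∧ u ∈ c.Wsub S ∧ w = x * u := by
  have hne : ∃ m, ∃ u ∈ c.Wsub S, c.len (w * u) = m := ⟨_, 1, one_mem _, rfl⟩
  classical
  obtain ⟨u, hu, hm⟩ := Nat.find_spec hne
  refine ⟨w * u, u⁻¹, ⟨mul_mem hw (c.Wsub_mono hST hu), fun v hv => ?_⟩, inv_mem hu, by simp⟩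
  rw [hm]
  exact Nat.find_min' hne ⟨u * v, mul_mem hu hv, by rw [mul_assoc]⟩

theorem len_longest_mul {S : Finset (Fin n)} {w : c.W} (hw : c.IsLongest S w) {u : c.W}
    (hu : u ∈ c.Wsub S) : c.len (w * u) + c.len u = c.len w := by
  have hneg : ∀ i ∈ S, 0 ≤ (-1 : ℤ) • c.act w (c.sroot i) := by
    intro i hi
    rcases c.nonneg_or_nonpos (c.act_mem w _ (c.sroot_mem i)) with h | h
    · have h1 := c.len_mul_s_of_pos h
      have h2 := hw.2 _ (mul_mem hw.1 (c.s_mem hi))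
      omega
    · simpa using h
  apply le_antisymm
  · refine c.Wsub_reduced_induction (p := fun u => c.len (w * u) + c.len u ≤ c.len w) ?_ ?_ hu
    · simp [len_one]
    · intro v hv i hi h ih
      have h2 := c.act_supp_nonneg hneg hv hi h
      have h3 := c.len_mul_s_of_neg (w := w * v) (i := i) (by simpa using h2)
      rw [← mul_assoc, c.len_mul_s_of_pos h]
      omega
  · have := c.len_mul (w * u) u⁻¹
    rwa [mul_inv_cancel_right, len_inv] at this

theorem minRep_longest {S T : Finset (Fin n)} (hST : S ⊆ T) {wT wS : c.W}
    (hT : c.IsLongest T wT) (hS : c.IsLongest S wS) : c.MinRep T S (wT * wS) := by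
  have hm := c.Wsub_mono hST
  refine ⟨mul_mem hT.1 (hm hS.1), fun u hu => ?_⟩
  have h1 := c.len_longest_mul hT (hm hS.1)
  have h2 := c.len_longest_mul hT (hm (mul_mem hS.1 hu))
  have h3 := hS.2 _ (mul_mem hS.1 hu)
  rw [← mul_assoc] at h2
  omega

end RootSystemData

namespace RootSystemData

variable {n : ℕ} (c : RootSystemData n)

/-! ### Products of consecutive simple reflections in type `A` -/

/-- The set of (`0`-based) indices `i` with `a ≤ i < b`. -/
def idx (n a b : ℕ) : Finset (Fin n) := Finset.univ.filter fun i => a ≤ (i : ℕ) ∧ (i : ℕ) < b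

/-- The product `s_a s_{a+1} ⋯ s_{m-1}` in `0`-based indices, equal to `1` if `m ≤ a`. -/
def run (a m : ℕ) : c.W := ((List.range' a (m - a)).map c.sN).prod

theorem mem_idx {a b : ℕ} {i : Fin n} : i ∈ idx n a b ↔ a ≤ (i : ℕ) ∧ (i : ℕ) < b := by
  simp [idx]

theorem idx_subset {a b a' b' : ℕ} (h : a' ≤ a) (h' : b ≤ b') : idx n a b ⊆ idx n a' b' := by
  intro i hi
  rw [mem_idx] at hi ⊢
  omega

theorem sN_eq {t : ℕ} (h : t < n) : c.sN t = c.s ⟨t, h⟩ := dif_pos h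

theorem sN_mul_sN (t : ℕ) : c.sN t * c.sN t = 1 := by
  unfold sN
  split_ifs
  · exact c.s_mul_s _
  · simp

theorem sN_mem {a b t : ℕ} (hn : t < n) (h1 : a ≤ t) (h2 : t < b) :
    c.sN t ∈ c.Wsub (idx n a b) := by
  rw [c.sN_eq hn]
  exact c.s_mem (mem_idx.mpr ⟨h1, h2⟩)

theorem run_of_le {a m : ℕ} (h : m ≤ a) : c.run a m = 1 := by
  simp [run, Nat.sub_eq_zero_of_le h]

theorem run_succ {a m : ℕ} (h : a ≤ m) : c.run a (m + 1) = c.run a m * c.sN m := by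
  have e : m + 1 - a = (m - a) + 1 := by omega
  have e' : a + (m - a) = m := by omega
  simp [run, e, List.range'_concat, e']

theorem run_mul_run {a b m : ℕ} (h1 : a ≤ b) (h2 : b ≤ m) :
    c.run a b * c.run b m = c.run a m := by
  induction m, h2 using Nat.le_induction with
  | base => rw [c.run_of_le le_rfl, mul_one]
  | succ m hm ih => rw [c.run_succ hm, ← mul_assoc, ih, c.run_succ (h1.trans hm)]

theorem run_single (a : ℕ) : c.run a (a + 1) = c.sN a := by
  rw [c.run_succ le_rfl, c.run_of_le le_rfl, one_mul]

theorem run_cons {a m : ℕ} (h : a < m) : c.run a m = c.sN a * c.run (a + 1) m := by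
  rw [← c.run_mul_run (Nat.le_succ a) h, run_single]

theorem run_mem {a m : ℕ} (hm : m ≤ n) : c.run a m ∈ c.Wsub (idx n a m) := by
  rcases Nat.lt_or_ge m a with h | h
  · rw [c.run_of_le h.le]; exact one_mem _
  · induction m, h using Nat.le_induction with
    | base => rw [c.run_of_le le_rfl]; exact one_mem _
    | succ m h ih =>
      rw [c.run_succ h]
      exact mul_mem (c.Wsub_mono (idx_subset le_rfl (Nat.le_succ m)) (ih (by omega)))
        (c.sN_mem (by omega) h (by omega))

theorem len_run {a m : ℕ} (hm : m ≤ n) : c.len (c.run a m) = m - a := by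
  rcases Nat.lt_or_ge m a with h | h
  · rw [c.run_of_le h.le, len_one]; omega
  · induction m, h using Nat.le_induction with
    | base => rw [c.run_of_le le_rfl, len_one]; omega
    | succ m h ih =>
      have hlt : m < n := by omega
      rw [c.run_succ h, c.sN_eq hlt, c.len_mul_s_of_pos, ih (by omega)]
      · omega
      · exact c.act_sroot_nonneg_of_notMem (c.run_mem (a := a) hlt.le) (by simp [mem_idx])

variable {c} {r : ℕ}

theorem act_s_far (hA : c.PathA r) {t j : Fin n} (ht : (t : ℕ) < r) (hj : (j : ℕ) < r)
    (h : (t : ℕ) + 2 ≤ j ∨ (j : ℕ) + 2 ≤ t) : c.act (c.s j) (c.sroot t) = c.sroot t := by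
  rw [act_s_sroot, (hA t j ht hj).2 h]; simp

theorem act_far (hA : c.PathA r) {t : Fin n} (ht : (t : ℕ) < r) {a b : ℕ} (hb : b ≤ r)
    (h : (t : ℕ) + 2 ≤ a ∨ b + 1 ≤ t) {w : c.W} (hw : w ∈ c.Wsub (idx n a b)) :
    c.act w (c.sroot t) = c.sroot t := by
  refine c.act_eq_self hw fun j hj => ?_
  rw [mem_idx] at hj
  exact act_s_far hA ht (by omega) (by omega)

theorem comm_far (hA : c.PathA r) (hr : r < n) {t a b : ℕ} (ht : t < r) (hb : b ≤ r)
    (h : t + 2 ≤ a ∨ b + 1 ≤ t) {w : c.W} (hw : w ∈ c.Wsub (idx n a b)) :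
    w * c.sN t = c.sN t * w := by
  rw [c.sN_eq (by omega)]
  exact c.conj_s (act_far hA (t := ⟨t, by omega⟩) ht hb h hw)

theorem act_run (hA : c.PathA r) (hr : r < n) {a t m : ℕ} (h1 : a ≤ t) (h2 : t + 1 < m)
    (h3 : m ≤ r) :
    c.act (c.run a m) (c.sroot ⟨t, by omega⟩) = c.sroot ⟨t + 1, by omega⟩ := by
  rw [← c.run_mul_run h1 (by omega : t ≤ m), c.run_cons (by omega : t < m), c.run_cons h2,
    c.act_mul, c.act_mul, c.act_mul,
    act_far hA (t := ⟨t, by omega⟩) (by simp; omega) h3 (by simp) (c.run_mem (by omega)),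
    c.sN_eq (by omega), c.sN_eq (by omega)]
  have e1 := (hA ⟨t, by omega⟩ ⟨t + 1, by omega⟩ (by simp; omega) (by simp; omega)).1 (by simp)
  have e2 := (hA ⟨t + 1, by omega⟩ ⟨t, by omega⟩ (by simp; omega) (by simp; omega)).1 (by simp)
  have e : c.act (c.s ⟨t, by omega⟩) (c.act (c.s ⟨t + 1, by omega⟩) (c.sroot ⟨t, by omega⟩)) =
      c.sroot ⟨t + 1, by omega⟩ := by
    obtain ⟨L, hL⟩ := c.exists_addHom (c.s ⟨t, by omega⟩)
    rw [act_s_sroot, e1, neg_one_smul, sub_neg_eq_add, hL, map_add, ← hL, ← hL, act_s_self,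
      act_s_sroot, e2]
    simp
  rw [e]
  exact act_far hA (t := ⟨t + 1, by omega⟩) (by simp; omega) (b := t) (by omega) (by simp)
    (c.run_mem (by omega))

theorem run_mul_sN (hA : c.PathA r) (hr : r < n) {a t m : ℕ} (h1 : a ≤ t) (h2 : t + 1 < m)
    (h3 : m ≤ r) : c.run a m * c.sN t = c.sN (t + 1) * c.run a m := by
  rw [c.sN_eq (by omega), c.sN_eq (by omega)]
  exact c.conj_s (act_run hA hr h1 h2 h3)

theorem run_mul_run_shift (hA : c.PathA r) (hr : r < n) {a b q M : ℕ} (h1 : a ≤ b) (h2 : b ≤ q)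
    (h3 : q < M) (h4 : M ≤ r) :
    c.run a M * c.run b q = c.run (b + 1) (q + 1) * c.run a M := by
  induction q, h2 using Nat.le_induction with
  | base => simp [run_of_le]
  | succ q hq ih =>
    rw [c.run_succ hq, ← mul_assoc, ih (by omega), mul_assoc,
      run_mul_sN hA hr (h1.trans hq) h3 h4, c.run_succ (by omega : b + 1 ≤ q + 1), mul_assoc]

/-- Every coset of `W_{[a,m)}` in `W_{[a,m]}` contains some `s_j ⋯ s_m`. -/
theorem normal_form (hA : c.PathA r) (hr : r < n) {a m : ℕ} (hm : m < r) (ham : a ≤ m)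
    {w : c.W} (hw : w ∈ c.Wsub (idx n a (m + 1))) :
    ∃ j y, a ≤ j ∧ j ≤ m + 1 ∧ y ∈ c.Wsub (idx n a m) ∧ w = c.run j (m + 1) * y := by
  refine c.Wsub_induction (p := fun w => ∃ j y, a ≤ j ∧ j ≤ m + 1 ∧ y ∈ c.Wsub (idx n a m) ∧
    w = c.run j (m + 1) * y) ?_ ?_ hw
  · exact ⟨m + 1, 1, by omega, le_rfl, one_mem _, by simp [run_of_le]⟩
  · rintro ⟨t, htn⟩ ht w _ ⟨j, y, h1, h2, hy, rfl⟩
    rw [mem_idx] at ht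
    simp only at ht
    rw [← c.sN_eq htn]
    rcases lt_trichotomy t j with h | rfl | h
    · rcases Nat.lt_or_ge (t + 1) j with h' | h'
      · refine ⟨j, c.sN t * y, h1, h2, mul_mem (c.sN_mem htn ht.1 (by omega)) hy, ?_⟩
        rw [← mul_assoc, ← mul_assoc,
          comm_far hA hr (t := t) (by omega) (b := m + 1) hm (Or.inl h') (c.run_mem (by omega))]
      · obtain rfl : j = t + 1 := by omega
        exact ⟨t, y, ht.1, by omega, hy, by rw [c.run_cons ht.2, mul_assoc]⟩
    · refine ⟨t + 1, y, by omega, ht.2, hy, ?_⟩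
      rw [c.run_cons ht.2, mul_assoc, ← mul_assoc, sN_mul_sN, one_mul]
    · obtain ⟨t, rfl⟩ : ∃ t', t = t' + 1 := ⟨t - 1, by omega⟩
      refine ⟨j, c.sN t * y, h1, h2, mul_mem (c.sN_mem (by omega) (by omega) (by omega)) hy, ?_⟩
      rw [← mul_assoc, ← run_mul_sN hA hr (by omega) ht.2 hm, mul_assoc]

/-- The element `s_j ⋯ s_m` is minimal in its coset modulo `W_{[0,m)}`. -/
theorem len_run_mul (hA : c.PathA r) (hr : r < n) {j m : ℕ} (hm : m < r) {y : c.W}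
    (hy : y ∈ c.Wsub (idx n 0 m)) :
    c.len (c.run j (m + 1) * y) = m + 1 - j + c.len y := by
  rw [c.len_mul_of_pos (S := idx n 0 m) ?_ hy, c.len_run (by omega)]
  rintro ⟨t, ht⟩ hi
  rw [mem_idx] at hi
  rcases Nat.lt_or_ge t j with h | h
  · exact c.act_sroot_nonneg_of_notMem (c.run_mem (a := j) (m := m + 1) (by omega))
      (by simp [mem_idx, h])
  · rw [act_run hA hr h (by simpa using hi.2) hm]
    exact c.sroot_nonneg _

theorem minRep_eq_run (hA : c.PathA r) (hr : r < n) {m : ℕ} (hm : m < r) {x : c.W}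
    (hx : c.MinRep (idx n 0 (m + 1)) (idx n 0 m) x) :
    c.len x ≤ m + 1 ∧ x = c.run (m + 1 - c.len x) (m + 1) := by
  obtain ⟨j, y, -, hj, hy, rfl⟩ := normal_form hA hr hm (Nat.zero_le m) hx.1
  have h1 := hx.2 _ (inv_mem hy)
  have h2 := len_run_mul hA hr (j := j) hm hy
  rw [mul_inv_cancel_right, c.len_run (by omega)] at h1
  have hy1 : y = 1 := c.eq_one_of_len (by omega)
  subst hy1
  rw [mul_one, c.len_run (by omega)]
  refine ⟨by omega, ?_⟩
  congr 1; omega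

/-- Elements of `W_{[a,a+d)}` have length at most `d (d + 1) / 2`. -/
theorem len_le_of_mem_idx (hA : c.PathA r) (hr : r < n) {a d : ℕ} (h : a + d ≤ r) {w : c.W}
    (hw : w ∈ c.Wsub (idx n a (a + d))) : 2 * c.len w ≤ d * (d + 1) := by
  induction d generalizing w with
  | zero =>
    have : w = 1 := by
      refine c.Wsub_induction (p := fun w => w = 1) rfl (fun i hi => ?_) hw
      rw [mem_idx] at hi; omega
    simp [this, len_one]
  | succ d ih =>
    obtain ⟨j, y, h1, h2, hy, rfl⟩ := normal_form hA hr (m := a + d) (by omega) (by omega) hw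
    have h3 := c.len_mul (c.run j (a + d + 1)) y
    rw [c.len_run (by omega)] at h3
    have h4 := ih (by omega) hy
    have h5 : a + d + 1 - j ≤ d + 1 := by omega
    nlinarith

theorem exists_len_eq (hA : c.PathA r) (hr : r < n) {m : ℕ} (h : m ≤ r) :
    ∃ w ∈ c.Wsub (idx n 0 m), 2 * c.len w = m * (m + 1) := by
  induction m with
  | zero => exact ⟨1, one_mem _, by simp [len_one]⟩
  | succ m ih =>
    obtain ⟨w, hw, hl⟩ := ih (by omega)
    refine ⟨c.run 0 (m + 1) * w, mul_mem (c.run_mem (by omega))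
      (c.Wsub_mono (idx_subset le_rfl (Nat.le_succ m)) hw), ?_⟩
    rw [len_run_mul hA hr (by omega) hw, Nat.sub_zero, mul_add, hl]
    ring

/-- `W_{Δ̃}` is the product of the commuting subgroups `W_{[0,k)}` and `W_{[k+1,r)}`, so the
length bounds of the two factors add up. -/
theorem len_le_of_mem_erase (hA : c.PathA r) (hr : r < n) {k : ℕ} (hk : k < r) {w : c.W}
    (hw : w ∈ c.Wsub ((idx n 0 r).erase ⟨k, by omega⟩)) :
    2 * c.len w ≤ k * (k + 1) + (r - k - 1) * (r - k) := by
  have key : ∃ x ∈ c.Wsub (idx n 0 (0 + k)), ∃ y ∈ c.Wsub (idx n (k + 1) (k + 1 + (r - k - 1))),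
      w = x * y := by
    refine c.Wsub_induction (p := fun w => ∃ x ∈ c.Wsub (idx n 0 (0 + k)),
      ∃ y ∈ c.Wsub (idx n (k + 1) (k + 1 + (r - k - 1))), w = x * y) ?_ ?_ hw
    · exact ⟨1, one_mem _, 1, one_mem _, by simp⟩
    · rintro ⟨t, ht⟩ hi w _ ⟨x, hx, y, hy, rfl⟩
      simp only [Finset.mem_erase, mem_idx, ne_eq, Fin.mk.injEq] at hi
      rw [← c.sN_eq ht]
      rcases Nat.lt_or_ge t k with h | h
      · exact ⟨c.sN t * x, mul_mem (c.sN_mem ht (by omega) (by omega)) hx, y, hy,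
          by rw [mul_assoc]⟩
      · refine ⟨x, hx, c.sN t * y, mul_mem (c.sN_mem ht (by omega) (by omega)) hy, ?_⟩
        rw [← mul_assoc, ← comm_far hA hr (t := t) (by omega) (b := 0 + k) (by omega)
          (Or.inr (by omega)) hx, mul_assoc]
  obtain ⟨x, hx, y, hy, rfl⟩ := key
  have h1 := len_le_of_mem_idx hA hr (by omega) hx
  have h2 := len_le_of_mem_idx hA hr (by omega) hy
  have h3 := c.len_mul x y
  have e : r - k - 1 + 1 = r - k := by omega
  rw [e] at h2
  omega

end RootSystemData

namespace RootSystemData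

variable {n : ℕ} {c : RootSystemData n} {r : ℕ}

/-! ### Decompositions along the chain of parabolic subgroups -/

/-- The product `f (m-1) ⋯ f 1 f 0`. -/
def dprod (f : ℕ → c.W) : ℕ → c.W
  | 0 => 1
  | m + 1 => f m * dprod f m

theorem dprod_eq (f : ℕ → c.W) (m : ℕ) :
    (List.ofFn fun i : Fin m => f i).reverse.prod = dprod f m := by
  induction m with
  | zero => simp [dprod]
  | succ m ih =>
    rw [List.ofFn_succ_last]
    simp [dprod, ← ih]

theorem dprod_add (f : ℕ → c.W) (a d : ℕ) :
    dprod f (a + d) = dprod (fun i => f (a + i)) d * dprod f a := by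
  induction d with
  | zero => simp [dprod]
  | succ d ih => rw [← add_assoc, dprod, ih, dprod, mul_assoc]

theorem len_dprod_le (f : ℕ → c.W) (m : ℕ) :
    c.len (dprod f m) ≤ ∑ i ∈ Finset.range m, c.len (f i) := by
  induction m with
  | zero => simp [dprod, len_one]
  | succ m ih =>
    rw [Finset.sum_range_succ, dprod]
    have := c.len_mul (f m) (dprod f m)
    omega

/-- The factors `f 0, …, f (m-1)` are minimal representatives along
`Δ_0 ⊆ Δ_1 ⊆ ⋯ ⊆ Δ_m`. -/
def Chain (c : RootSystemData n) (m : ℕ) (f : ℕ → c.W) : Prop :=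
  ∀ i < m, c.MinRep (idx n 0 (i + 1)) (idx n 0 i) (f i)

theorem Chain.mem {f : ℕ → c.W} {m : ℕ} (hf : Chain c m f) {j : ℕ} (hj : j ≤ m) :
    dprod f j ∈ c.Wsub (idx n 0 j) := by
  induction j with
  | zero => exact one_mem _
  | succ j ih =>
    exact mul_mem (hf j hj).1 (c.Wsub_mono (idx_subset le_rfl (Nat.le_succ j)) (ih (by omega)))

theorem Chain.len {f : ℕ → c.W} {m : ℕ} (hf : Chain c m f) :
    c.len (dprod f m) = ∑ i ∈ Finset.range m, c.len (f i) := by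
  induction m with
  | zero => simp [dprod, len_one]
  | succ m ih =>
    have hf' : Chain c m f := fun i hi => hf i (by omega)
    rw [dprod, c.len_minRep_mul (hf m (by omega)) (hf'.mem le_rfl), ih hf',
      Finset.sum_range_succ, add_comm]

theorem exists_chain {m : ℕ} {w : c.W} (hw : w ∈ c.Wsub (idx n 0 m)) :
    ∃ f, Chain c m f ∧ w = dprod f m := by
  induction m generalizing w with
  | zero =>
    refine ⟨fun _ => 1, fun i hi => by omega, ?_⟩
    refine c.Wsub_induction (p := fun w => w = _) rfl (fun i hi => ?_) hw
    rw [mem_idx] at hi; omega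
  | succ m ih =>
    obtain ⟨x, u, hx, hu, rfl⟩ := c.exists_minRep (idx_subset le_rfl (Nat.le_succ m)) hw
    obtain ⟨f, hf, rfl⟩ := ih hu
    have e : ∀ j ≤ m, dprod (fun i => if i = m then x else f i) j = dprod f j := by
      intro j hj
      induction j with
      | zero => rfl
      | succ j ih => rw [dprod, dprod, ih (by omega), if_neg (by omega)]
    refine ⟨fun i => if i = m then x else f i, fun i hi => ?_, ?_⟩
    · by_cases h : i = m
      · subst h; simpa using hx
      · simpa [h] using hf i (by omega)
    · rw [dprod, e m le_rfl, if_pos rfl]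

theorem deltaSet_of_le {j : ℕ} (h : j ≤ r) : deltaSet n r j = idx n 0 j := by
  simp [deltaSet, idx, show j ≠ r + 1 by omega]

/-- For an element of `W_{Δ_P}` the top factor `v_{r+1}` of a decomposition is trivial. -/
theorem IsDecomp.chain {x : c.W} {v : Fin (r + 1) → c.W} (hv : c.IsDecomp r x v)
    (hx : x ∈ c.Wsub (idx n 0 r)) :
    ∃ f : ℕ → c.W, Chain c r f ∧ x = dprod f r ∧ (∀ p : Fin (r + 1), f p = v p) ∧ f r = 1 := by
  obtain ⟨h1, h2⟩ := hv
  let f : ℕ → c.W := fun i => if h : i < r + 1 then v ⟨i, h⟩ else 1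
  have hfv : ∀ p : Fin (r + 1), f p = v p := fun p => dif_pos p.2
  have hf : Chain c r f := fun i hi => by
    have := h1 ⟨i, by omega⟩
    simp only [deltaSet_of_le hi, deltaSet_of_le hi.le] at this
    rwa [← hfv] at this
  have e : x = f r * dprod f r := by
    rw [h2]
    have := dprod_eq f (r + 1)
    simp only [hfv] at this
    rw [this, dprod]
  have hr1 : f r = 1 := by
    have h := h1 (Fin.last r)
    rw [← hfv, Fin.val_last, deltaSet_of_le le_rfl] at h
    have hm : f r ∈ c.Wsub (idx n 0 r) := by
      rw [eq_mul_inv_of_mul_eq e.symm]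
      exact mul_mem hx (inv_mem (hf.mem le_rfl))
    have := h.2 _ (inv_mem hm)
    rw [mul_inv_cancel, len_one] at this
    exact c.eq_one_of_len (by omega)
  exact ⟨f, hf, by rw [e, hr1, one_mul], hfv, hr1⟩

/-- The factors below the omitted node `k` lie in `W_{Δ̃}`, hence are trivial by minimality. -/
theorem chain_low (hr : r < n) {k : ℕ} (hk : k < r) {f : ℕ → c.W}
    (hf : Chain c r f)
    (hx : c.MinRep (idx n 0 r) ((idx n 0 r).erase ⟨k, by omega⟩) (dprod f r))
    {i : ℕ} (hi : i < k) : c.len (f i) = 0 := by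
  have hy : dprod f k ∈ c.Wsub ((idx n 0 r).erase ⟨k, by omega⟩) := by
    refine c.Wsub_mono (fun j hj => ?_) (hf.mem hk.le)
    rw [mem_idx] at hj
    simp only [Finset.mem_erase, mem_idx, ne_eq, Fin.ext_iff]
    omega
  obtain ⟨d, rfl⟩ : ∃ d, r = k + d := ⟨r - k, by omega⟩
  have h1 := hx.2 _ (inv_mem hy)
  have h2 := len_dprod_le (fun i => f (k + i)) d
  rw [hf.len, dprod_add, mul_inv_cancel_right, Finset.sum_range_add] at h1
  have h3 : c.len (f i) ≤ ∑ i ∈ Finset.range k, c.len (f i) :=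
    Finset.single_le_sum (f := fun i => c.len (f i)) (fun _ _ => Nat.zero_le _)
      (Finset.mem_range.mpr hi)
  omega

/-- If `ℓ(f (p+1)) > ℓ(f p)` with `p ≥ k`, then the shift relation lets `s_{p+1}` be moved to
the right end of a word for `dprod f r`, so right multiplication by `s_{p+1} ∈ W_{Δ̃}` would
shorten it. -/
theorem chain_step (hA : c.PathA r) (hr : r < n) {k : ℕ} (hk : k < r) {f : ℕ → c.W}
    (hf : Chain c r f)
    (hx : c.MinRep (idx n 0 r) ((idx n 0 r).erase ⟨k, by omega⟩) (dprod f r))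
    {p : ℕ} (hp : k ≤ p) (hq : p + 1 < r) :
    c.len (f (p + 1)) ≤ c.len (f p) := by
  by_contra! hlt
  obtain ⟨hb, eb⟩ := minRep_eq_run hA hr (by omega) (hf p (by omega))
  obtain ⟨ha, ea⟩ := minRep_eq_run hA hr hq (hf (p + 1) hq)
  set jb := c.len (f p) with hjb
  set ja := c.len (f (p + 1)) with hja
  obtain ⟨d, hd⟩ : ∃ d, r = p + 2 + d := ⟨r - (p + 2), by omega⟩
  have hPp := hf.mem (j := p) (by omega)
  have hs : c.sN (p + 1) ∈ c.Wsub ((idx n 0 r).erase ⟨k, by omega⟩) := by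
    rw [c.sN_eq (by omega)]
    refine c.s_mem ?_
    simp only [Finset.mem_erase, mem_idx, ne_eq, Fin.mk.injEq]
    omega
  have h1 := hx.2 _ hs
  rw [hf.len] at h1
  set Q := dprod (fun i => f (p + 2 + i)) d with hQ
  have e : dprod f r * c.sN (p + 1) =
      Q * (c.run (p + 1 - jb + 1) (p + 2) * (c.run (p + 2 - ja) (p + 1) * dprod f p)) := by
    have e1 : dprod f r = Q * (f (p + 1) * (f p * dprod f p)) := by
      rw [hd, dprod_add]; rfl
    have e2 : f (p + 1) * f p = c.run (p + 1 - jb + 1) (p + 2) *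
        (c.run (p + 2 - ja) (p + 1) * c.sN (p + 1)) := by
      rw [← c.run_succ (by omega), ea, eb]
      exact run_mul_run_shift hA hr (by omega) (by omega) (by omega) (by omega)
    rw [e1, ← mul_assoc (f (p + 1)), e2]
    simp only [mul_assoc]
    rw [comm_far hA hr hq (by omega) (Or.inr le_rfl) hPp, ← mul_assoc (c.sN (p + 1)),
      sN_mul_sN, one_mul]
  rw [e] at h1
  have l1 := c.len_mul Q
    (c.run (p + 1 - jb + 1) (p + 2) * (c.run (p + 2 - ja) (p + 1) * dprod f p))
  have l2 := c.len_mul (c.run (p + 1 - jb + 1) (p + 2)) (c.run (p + 2 - ja) (p + 1) * dprod f p)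
  have l3 := c.len_mul (c.run (p + 2 - ja) (p + 1)) (dprod f p)
  have l4 := len_dprod_le (fun i => f (p + 2 + i)) d
  have l5 := len_dprod_le f p
  rw [← hQ] at l4
  rw [c.len_run (by omega)] at l2 l3
  rw [hd, Finset.sum_range_add, Finset.sum_range_succ, Finset.sum_range_succ, ← hja, ← hjb] at h1
  omega

theorem chain_anti (hA : c.PathA r) (hr : r < n) {k : ℕ} (hk : k < r) {f : ℕ → c.W}
    (hf : Chain c r f)
    (hx : c.MinRep (idx n 0 r) ((idx n 0 r).erase ⟨k, by omega⟩) (dprod f r))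
    {p q : ℕ} (hp : k ≤ p) (hpq : p ≤ q) (hq : q < r) :
    c.len (f q) ≤ c.len (f p) := by
  induction q, hpq using Nat.le_induction with
  | base => exact le_rfl
  | succ q h ih => exact (chain_step hA hr hk hf hx (by omega) hq).trans (ih (by omega))

/-- If `dprod f r` has length at least `(k + 1) (r - k)`, which is `k (r - k + 1)` for the
`1`-based index, then all the upper bounds on its factors are attained. -/
theorem chain_eq (hA : c.PathA r) (hr : r < n) {k : ℕ} (hk : k < r) {f : ℕ → c.W}
    (hf : Chain c r f)
    (hx : c.MinRep (idx n 0 r) ((idx n 0 r).erase ⟨k, by omega⟩) (dprod f r))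
    (hlen : (k + 1) * (r - k) ≤ c.len (dprod f r)) {i : ℕ} (h1 : k ≤ i)
    (h2 : i < r) : c.len (f i) = k + 1 := by
  have hle : ∀ i, k ≤ i → i < r → c.len (f i) ≤ k + 1 := fun i h1 h2 =>
    (chain_anti hA hr hk hf hx le_rfl h1 h2).trans (minRep_eq_run hA hr hk (hf k hk)).1
  obtain ⟨d, hd⟩ : ∃ d, r = k + d := ⟨r - k, by omega⟩
  have h0 : ∑ i ∈ Finset.range k, c.len (f i) = 0 :=
    Finset.sum_eq_zero fun i hi => chain_low hr hk hf hx (Finset.mem_range.mp hi)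
  have hs : c.len (dprod f r) = ∑ i ∈ Finset.range d, c.len (f (k + i)) := by
    rw [hf.len, hd, Finset.sum_range_add, h0, zero_add]
  have hle' : ∀ i ∈ Finset.range d, c.len (f (k + i)) ≤ k + 1 := fun i hi => by
    rw [Finset.mem_range] at hi
    exact hle _ (by omega) (by omega)
  have hsum : ∑ i ∈ Finset.range d, c.len (f (k + i)) = ∑ i ∈ Finset.range d, (k + 1) := by
    refine le_antisymm (Finset.sum_le_sum hle') ?_
    rw [← hs, Finset.sum_const, Finset.card_range, smul_eq_mul, mul_comm]
    have : r - k = d := by omega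
    rwa [this] at hlen
  have := (Finset.sum_eq_sum_iff_of_le hle').mp hsum (i - k) (Finset.mem_range.mpr (by omega))
  rwa [show k + (i - k) = i by omega] at this

/-- The inequality `ℓ(ω_P ω_{Δ̃}) ≥ k (r - k + 1)`, rewritten for the `0`-based index of the
omitted node. -/
theorem len_longest_quotient (hA : c.PathA r) (hr : r < n) {k : ℕ} (hk : k < r) {wP wT : c.W}
    (hP : c.IsLongest (idx n 0 r) wP)
    (hT : c.IsLongest ((idx n 0 r).erase ⟨k, by omega⟩) wT) :
    (k + 1) * (r - k) ≤ c.len (wP * wT) := by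
  have h1 := c.len_longest_mul hP (c.Wsub_mono (Finset.erase_subset _ _) hT.1)
  obtain ⟨w, hw, h2⟩ := exists_len_eq hA hr (m := r) le_rfl
  have h3 := hP.2 w hw
  have h4 := len_le_of_mem_erase hA hr hk hT.1
  obtain ⟨d, rfl⟩ : ∃ d, r = k + 1 + d := ⟨r - (k + 1), by omega⟩
  rw [show k + 1 + d - k - 1 = d by omega, show k + 1 + d - k = d + 1 by omega] at h4
  rw [show k + 1 + d - k = d + 1 by omega]
  nlinarith

theorem uElt_eq_run (i m : ℕ) : c.uElt i m = c.run (m - i) m := by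
  unfold uElt uu run
  have e : m + 1 - (m - i + 1) = m - (m - i) := by omega
  rw [e, List.range'_eq_map_range, List.range'_eq_map_range, List.map_map, List.map_map]
  congr 2
  funext t
  simp only [Function.comp]
  congr 1; omega

end RootSystemData

/-- Let `Δ̃ = Δ_P \ {α_k}` for `1 ≤ k ≤ r`, with `Δ_P` of type `A_r`.
(a) `ω_P ω_{Δ̃} = u_k^{(r)} u_k^{(r-1)} ⋯ u_k^{(k)}` and
`gr(ω_P ω_{Δ̃}) = Σ_{p=k}^r k·e_p`.
(b) For every `v ∈ W_{Δ_P}^{Δ̃}`, writing `gr(v) = Σ_p j_p e_p`, one has `j_p = 0`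
for `p < k` and for `p = r+1`, `j_k ≤ k`, and `j_k ≥ j_{k+1} ≥ ⋯ ≥ j_r`. -/
theorem longest_parabolic_quotient_A_type {n : ℕ} (c : RootSystemData n)
    (r : ℕ) (hr1 : 1 ≤ r) (hrn : r < n) (hA : c.PathA r)
    (k : ℕ) (hk1 : 1 ≤ k) (hkr : k ≤ r) :
    (∀ wP wT : c.W, c.IsLongest (deltaSet n r r) wP →
      c.IsLongest ((deltaSet n r r).erase ⟨k - 1, by omega⟩) wT →
      wP * wT =
        (List.ofFn fun t : Fin (r - k + 1) => c.uElt k (k + (t : ℕ))).reverse.prod ∧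
      ∀ v : Fin (r + 1) → c.W, c.IsDecomp r (wP * wT) v →
        ∀ p : Fin (r + 1),
          c.len (v p) = if k ≤ (p : ℕ) + 1 ∧ (p : ℕ) + 1 ≤ r then k else 0) ∧
    (∀ x : c.W,
      c.MinRep (deltaSet n r r) ((deltaSet n r r).erase ⟨k - 1, by omega⟩) x →
      ∀ v : Fin (r + 1) → c.W, c.IsDecomp r x v →
        (∀ p : Fin (r + 1), ((p : ℕ) + 1 < k ∨ (p : ℕ) = r) → c.len (v p) = 0) ∧
        c.len (v ⟨k - 1, by omega⟩) ≤ k ∧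
        (∀ p q : Fin (r + 1), k ≤ (p : ℕ) + 1 → (p : ℕ) ≤ (q : ℕ) → (q : ℕ) < r →
          c.len (v q) ≤ c.len (v p))) := by
  obtain ⟨k, rfl⟩ : ∃ k', k = k' + 1 := ⟨k - 1, by omega⟩
  simp only [Nat.add_sub_cancel]
  rw [RootSystemData.deltaSet_of_le le_rfl]
  constructor
  · intro wP wT hP hT
    have hmin := c.minRep_longest (Finset.erase_subset _ _) hP hT
    have hlen := RootSystemData.len_longest_quotient hA hrn hkr hP hT
    constructor
    · obtain ⟨f, hf, e⟩ := RootSystemData.exists_chain hmin.1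
      rw [e] at hmin hlen ⊢
      have h1 : RootSystemData.dprod f k = 1 := by
        refine c.eq_one_of_len (Nat.le_zero.mp
          ((RootSystemData.len_dprod_le f k).trans_eq (Finset.sum_eq_zero fun i hi => ?_)))
        exact RootSystemData.chain_low hrn hkr hf hmin (Finset.mem_range.mp hi)
      have h2 : RootSystemData.dprod f r =
          RootSystemData.dprod (fun i => f (k + i)) (r - (k + 1) + 1) := by
        have h := RootSystemData.dprod_add f k (r - (k + 1) + 1)
        rwa [h1, mul_one, show k + (r - (k + 1) + 1) = r by omega] at h
      rw [h2, ← RootSystemData.dprod_eq]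
      congr 3
      funext t
      have ht := t.2
      have h3 := RootSystemData.chain_eq hA hrn hkr hf hmin hlen
        (i := k + t) (by omega) (by omega)
      have h4 := (RootSystemData.minRep_eq_run hA hrn (by omega) (hf (k + t) (by omega))).2
      rw [h3] at h4
      rw [h4, RootSystemData.uElt_eq_run]
      congr 1 <;> omega
    · intro v hv p
      obtain ⟨f, hf, e, hfv, hfr⟩ := hv.chain hmin.1
      rw [e] at hmin hlen
      rw [← hfv]
      have hp := p.2
      split_ifs with h
      · exact RootSystemData.chain_eq hA hrn hkr hf hmin hlen (by omega) (by omega)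
      · rcases Nat.lt_or_ge (p : ℕ) k with h' | h'
        · exact RootSystemData.chain_low hrn hkr hf hmin h'
        · rw [show (p : ℕ) = r by omega, hfr, c.len_one]
  · intro x hx v hv
    obtain ⟨f, hf, rfl, hfv, hfr⟩ := hv.chain hx.1
    simp only [← hfv]
    refine ⟨fun p hp => ?_, ?_, fun p q h1 h2 h3 => ?_⟩
    · rcases hp with h | h
      · exact RootSystemData.chain_low hrn hkr hf hx (by omega)
      · rw [h, hfr, c.len_one]
    · exact (RootSystemData.minRep_eq_run hA hrn hkr (hf k hkr)).1
    · exact RootSystemData.chain_anti hA hrn hkr hf hx (by omega) h2 h3
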